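/- arXiv:0807.1838 — 3 statements merged into one kernel-verified Lean document; each statement's English description precedes it below -/
import Mathlib

section
/- Let J ⊆ I be ideals in ℂ[x] = ℂ[x₁,…,xₙ] with dim_ℂ ℂ[x]/(J:I) < ∞, let {p₁,…,pₛ} = V(J) \ V(I), and let k be a positive integer such that (m_{p₁} ∩ ⋯ ∩ m_{pₛ} ∩ I)ᵏ ⊆ J. Then J:I = (⋂_{i=1}^{s} (J + m_{pᵢ}ᵏ)) ∩ ((J + Iᵏ):I). -/
open MvPolynomial

/-- The zero set `V(S)` of an ideal of `ℂ[x₁,…,xₙ]`. -/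
def zeroSet {n : ℕ} (S : Ideal (MvPolynomial (Fin n) ℂ)) : Set (Fin n → ℂ) :=
  {p | ∀ f ∈ S, eval p f = 0}

/-- The maximal ideal `m_p` generated by `x₁ - p₁, …, xₙ - pₙ`. -/
noncomputable def mIdeal {n : ℕ} (p : Fin n → ℂ) : Ideal (MvPolynomial (Fin n) ℂ) :=
  Ideal.span (Set.range fun i => X i - C (p i))

lemma sub_C_mem_mIdeal {n : ℕ} (p : Fin n → ℂ) (g : MvPolynomial (Fin n) ℂ) :
    g - C (eval p g) ∈ mIdeal p := by
  induction g using MvPolynomial.induction_on with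
  | C a => simp
  | add f g hf hg =>
    have := add_mem hf hg
    convert this using 1
    simp only [map_add]; ring
  | mul_X f i hf =>
    have h : (X i - C (p i) : MvPolynomial (Fin n) ℂ) ∈ mIdeal p :=
      Ideal.subset_span ⟨i, rfl⟩
    have := add_mem (Ideal.mul_mem_left _ f h) (Ideal.mul_mem_right (C (p i)) _ hf)
    convert this using 1
    simp only [map_mul, eval_X]; ring

lemma coprime_mIdeal {n : ℕ} (p : Fin n → ℂ) (I : Ideal (MvPolynomial (Fin n) ℂ))
    (g : MvPolynomial (Fin n) ℂ) (hg : g ∈ I) (h : eval p g ≠ 0) :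
    IsCoprime (mIdeal p) I := by
  rw [Ideal.isCoprime_iff_exists]
  refine ⟨_, neg_mem (Ideal.mul_mem_left _ (C (eval p g)⁻¹) (sub_C_mem_mIdeal p g)), _,
    Ideal.mul_mem_left _ (C (eval p g)⁻¹) hg, ?_⟩
  have : (C (eval p g)⁻¹ * C (eval p g) : MvPolynomial (Fin n) ℂ) = 1 := by
    rw [← C_mul, inv_mul_cancel₀ h, C_1]
  linear_combination this

lemma iInf_add_le {R : Type*} [CommRing R] {ι : Type*} (J : Ideal R) (a : ι → Ideal R)
    (s : Finset ι) (h : ∀ i ∈ s, ∀ j ∈ s, i ≠ j → IsCoprime (a i) (a j)) :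
    (⨅ i ∈ s, (J + a i)) ≤ J + ∏ i ∈ s, a i := by
  classical
  induction s using Finset.induction_on with
  | empty => simp
  | insert i s his ih =>
    rw [Finset.iInf_insert, Finset.prod_insert his]
    have ih' := ih fun i hi j hj => h i (by simp [hi]) j (by simp [hj])
    have hc : IsCoprime (a i) (∏ j ∈ s, a j) := IsCoprime.prod_right fun j hj =>
      h i (by simp) j (by simp [hj]) (by rintro rfl; exact his hj)
    rw [Ideal.isCoprime_iff_exists] at hc
    obtain ⟨x, hx, y, hy, hxy⟩ := hc
    rintro f ⟨h1, h2⟩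
    obtain ⟨j1, hj1, u, hu, rfl⟩ := Submodule.mem_sup.1 h1
    obtain ⟨j2, hj2, v, hv, e⟩ := Submodule.mem_sup.1 (ih' h2)
    refine Submodule.mem_sup.2 ⟨x * j2 + y * j1, add_mem (J.mul_mem_left _ hj2)
      (J.mul_mem_left _ hj1), x * v + u * y, add_mem (Ideal.mul_mem_mul hx hv)
      (Ideal.mul_mem_mul hu hy), ?_⟩
    linear_combination x * e + (j1 + u) * hxy

/-- Lemma 3: if `(m_{p₁} ∩ ⋯ ∩ m_{pₛ} ∩ I)ᵏ ⊆ J` then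
`J:I = (⋂ᵢ (J + m_{pᵢ}ᵏ)) ∩ ((J + Iᵏ):I)`. -/
theorem stmt_2 {n : ℕ} (J I : Ideal (MvPolynomial (Fin n) ℂ)) (hJI : J ≤ I)
    (hfin : FiniteDimensional ℂ (MvPolynomial (Fin n) ℂ ⧸ J.colon I))
    (s : ℕ) (p : Fin s → (Fin n → ℂ)) (hinj : Function.Injective p)
    (hrange : Set.range p = zeroSet J \ zeroSet I)
    (k : ℕ) (hk : 0 < k)
    (hincl : ((⨅ i : Fin s, mIdeal (p i)) ⊓ I) ^ k ≤ J) :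
    J.colon I = (⨅ i : Fin s, (J + mIdeal (p i) ^ k)) ⊓ ((J + I ^ k).colon I) := by
  have hcI : ∀ i, IsCoprime (mIdeal (p i)) I := by
    intro i
    have hi : p i ∈ zeroSet J \ zeroSet I := hrange ▸ ⟨i, rfl⟩
    have h2 := hi.2
    simp only [zeroSet, Set.mem_setOf_eq, not_forall] at h2
    obtain ⟨g, hg, h⟩ := h2
    exact coprime_mIdeal _ _ g hg h
  have hcc : ∀ i j, i ≠ j → IsCoprime (mIdeal (p i)) (mIdeal (p j)) := by
    intro i j hij
    have hne : p i ≠ p j := fun h => hij (hinj h)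
    obtain ⟨l, hl⟩ := Function.ne_iff.1 hne
    refine coprime_mIdeal _ _ (X l - C (p j l)) (Ideal.subset_span ⟨l, rfl⟩) ?_
    simpa [sub_eq_zero] using hl
  apply le_antisymm
  · intro f hf
    rw [Submodule.mem_colon] at hf
    refine ⟨?_, ?_⟩
    · refine (Submodule.mem_iInf _).2 fun i => ?_
      have hc : IsCoprime (mIdeal (p i) ^ k) I := (hcI i).pow_left
      rw [Ideal.isCoprime_iff_exists] at hc
      obtain ⟨x, hx, y, hy, hxy⟩ := hc
      refine Submodule.mem_sup.2 ⟨f * y, hf y hy, f * x, Ideal.mul_mem_left _ _ hx, ?_⟩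
      linear_combination f * hxy
    · exact Submodule.mem_colon.2 fun g hg => Submodule.mem_sup_left (hf g hg)
  · rintro f ⟨h1, h2⟩
    have h3 : f ∈ J + ∏ i, mIdeal (p i) ^ k := by
      refine iInf_add_le J (fun i => mIdeal (p i) ^ k) Finset.univ
        (fun i _ j _ hij => (hcc i j hij).pow) ?_
      simpa using h1
    have hMI : (∏ i, mIdeal (p i) ^ k) * I ^ k ≤ J := by
      rw [Finset.prod_pow, ← mul_pow]
      refine le_trans (Ideal.pow_right_mono ?_ k) hincl
      refine Ideal.mul_le_inf.trans (inf_le_inf_right _ (le_iInf fun i => ?_))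
      exact Ideal.le_of_dvd (Finset.dvd_prod_of_mem _ (Finset.mem_univ i))
    have hc : IsCoprime (∏ i, mIdeal (p i) ^ k) (I ^ k) :=
      IsCoprime.prod_left fun i _ => (hcI i).pow
    rw [Ideal.isCoprime_iff_exists] at hc
    obtain ⟨x, hx, y, hy, hxy⟩ := hc
    refine Submodule.mem_colon.2 fun g hg => ?_
    obtain ⟨j1, hj1, u, hu, e1⟩ := Submodule.mem_sup.1 h3
    obtain ⟨j2, hj2, v, hv, e2⟩ := Submodule.mem_sup.1 (Submodule.mem_colon.1 h2 g hg)
    rw [smul_eq_mul] at e2 ⊢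
    have e : f * g = (x * j2 + y * g * j1) + (x * v + g * (u * y)) := by
      linear_combination (-f * g) * hxy - x * e2 - y * g * e1
    rw [e]
    exact add_mem (add_mem (J.mul_mem_left _ hj2) (J.mul_mem_left _ hj1))
      (add_mem (hMI (Ideal.mul_mem_mul hx hv))
        (J.mul_mem_left _ (hMI (Ideal.mul_mem_mul hu hy))))
end

section
/- Let J ⊆ I be ideals in ℂ[x] = ℂ[x₁,…,xₙ] with dim_ℂ ℂ[x]/(J:I) < ∞ and (J:I) + I = ℂ[x], and let {p₁,…,pₛ} = V(J) \ V(I). Then for all sufficiently large positive integers k, J:I = ⋂_{i=1}^{s} (J + m_{pᵢ}ᵏ). -/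
open MvPolynomial

lemma aux_sub_mem {n : ℕ} (p : Fin n → ℂ) (f : MvPolynomial (Fin n) ℂ) :
    f - C (eval p f) ∈ mIdeal p := by
  induction f using MvPolynomial.induction_on with
  | C a => simp
  | add f g hf hg =>
    have := (mIdeal p).add_mem hf hg
    convert this using 1
    simp only [map_add]; ring
  | mul_X f i hf =>
    have h1 := (mIdeal p).mul_mem_right (X i) hf
    have h2 : X i - C (p i) ∈ mIdeal p := Ideal.subset_span ⟨i, rfl⟩
    have h3 := (mIdeal p).mul_mem_left (C (eval p f)) h2
    convert (mIdeal p).add_mem h1 h3 using 1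
    simp only [map_mul, eval_X]; ring

lemma aux_coprime {n : ℕ} (p : Fin n → ℂ) (I : Ideal (MvPolynomial (Fin n) ℂ))
    (f : MvPolynomial (Fin n) ℂ) (hf : f ∈ I) (h : eval p f ≠ 0) : IsCoprime (mIdeal p) I := by
  rw [Ideal.isCoprime_iff_exists]
  refine ⟨_, (mIdeal p).mul_mem_left (- C (eval p f)⁻¹) (aux_sub_mem p f),
    _, I.mul_mem_left (C (eval p f)⁻¹) hf, ?_⟩
  have : (C (eval p f)⁻¹ * C (eval p f) : MvPolynomial (Fin n) ℂ) = 1 := by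
    rw [← C_mul, inv_mul_cancel₀ h, C_1]
  linear_combination this

lemma aux_eval {n : ℕ} (p : Fin n → ℂ) (f : MvPolynomial (Fin n) ℂ) (hf : f ∈ mIdeal p) :
    eval p f = 0 := by
  have : mIdeal p ≤ RingHom.ker (eval p) := by
    refine Ideal.span_le.2 ?_
    rintro _ ⟨i, rfl⟩
    simp [RingHom.mem_ker]
  exact this hf

lemma aux_prod {R ι : Type*} [CommRing R] (Q : Ideal R) (m : ι → Ideal R) (t : Finset ι) :
    ∏ i ∈ t, (Q ⊔ m i) ≤ Q ⊔ ∏ i ∈ t, m i := by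
  classical
  induction t using Finset.induction_on with
  | empty => simp
  | insert a t ha ih =>
    rw [Finset.prod_insert ha, Finset.prod_insert ha]
    refine (Ideal.mul_mono_right ih).trans ?_
    rw [Ideal.sup_mul, Ideal.mul_sup (I := m a)]
    refine sup_le (le_trans ?_ le_sup_left) (sup_le (le_trans ?_ le_sup_left) le_sup_right)
    · exact Ideal.mul_le_left
    · exact Ideal.mul_le_right

/-- Corollary 7: if `(J:I) + I = ℂ[x]` then for all `k` large enough
`J:I = ⋂ᵢ (J + m_{pᵢ}ᵏ)`. -/
theorem stmt_6 {n : ℕ} (J I : Ideal (MvPolynomial (Fin n) ℂ)) (hJI : J ≤ I)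
    (hfin : FiniteDimensional ℂ (MvPolynomial (Fin n) ℂ ⧸ J.colon I))
    (hsum : J.colon I + I = ⊤)
    (s : ℕ) (p : Fin s → (Fin n → ℂ)) (hinj : Function.Injective p)
    (hrange : Set.range p = zeroSet J \ zeroSet I) :
    ∃ K : ℕ, 0 < K ∧ ∀ k : ℕ, K ≤ k →
      J.colon I = ⨅ i : Fin s, (J + mIdeal (p i) ^ k) := by
  have hJQ : J ≤ J.colon I := Ideal.le_colon
  have hrad : ∏ i, mIdeal (p i) ≤ (J.colon I).radical := by
    rw [← vanishingIdeal_zeroLocus_eq_radical (K := ℂ)]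
    intro f hf
    rw [mem_vanishingIdeal_iff]
    intro x hx
    rw [mem_zeroLocus_iff] at hx
    simp only [aeval_eq_eval] at hx ⊢
    have hxr : x ∈ Set.range p := by
      rw [hrange]
      refine ⟨fun g hg => hx g (hJQ hg), fun hI => ?_⟩
      obtain ⟨a, ha, b, hb, hab⟩ := Ideal.isCoprime_iff_exists.1
        (Ideal.isCoprime_iff_sup_eq.2 hsum)
      have h1 := congrArg (eval x) hab
      have h2 : eval x a = 0 := hx a ha
      rw [map_add, h2, hI b hb] at h1
      simp at h1
    obtain ⟨i, rfl⟩ := hxr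
    refine aux_eval _ _ ?_
    exact (Ideal.prod_le_inf.trans (Finset.inf_le (Finset.mem_univ i))) hf
  obtain ⟨K, hK⟩ := Ideal.exists_pow_le_of_le_radical_of_fg hrad
    (IsNoetherian.noetherian _)
  refine ⟨K + 1, K.succ_pos, fun k hk => le_antisymm ?_ ?_⟩
  · refine le_iInf fun i f hf => ?_
    have hi : p i ∈ zeroSet J \ zeroSet I := hrange ▸ Set.mem_range_self i
    have hi2 : ∃ g ∈ I, eval (p i) g ≠ 0 := by
      by_contra! hc
      exact hi.2 hc
    obtain ⟨g, hg, hg0⟩ := hi2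
    obtain ⟨a, ha, b, hb, hab⟩ := Ideal.isCoprime_iff_exists.1
      ((aux_coprime (p i) I g hg hg0).pow_left (m := k))
    have h1 : f * b ∈ J := Submodule.mem_colon.1 hf b hb
    have : f = f * b + f * a := by linear_combination (-f) * hab
    rw [this]
    exact Submodule.add_mem_sup h1 (Ideal.mul_mem_left _ _ ha)
  · have hcop : ∀ i j, i ≠ j → IsCoprime (J.colon I ⊔ mIdeal (p i) ^ k)
        (J.colon I ⊔ mIdeal (p j) ^ k) := by
      intro i j hij
      obtain ⟨l, hl⟩ := Function.ne_iff.1 (hinj.ne hij)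
      have hc : IsCoprime (mIdeal (p i)) (mIdeal (p j)) :=
        aux_coprime (p i) _ (X l - C (p j l)) (Ideal.subset_span ⟨l, rfl⟩)
          (by simpa [sub_eq_zero] using hl)
      have hc2 : IsCoprime (mIdeal (p i) ^ k) (mIdeal (p j) ^ k) := hc.pow
      rw [Ideal.isCoprime_iff_sup_eq] at hc2 ⊢
      exact top_le_iff.1 (hc2.symm.le.trans (sup_le_sup le_sup_right le_sup_right))
    have h1 : (⨅ i, (J + mIdeal (p i) ^ k)) ≤ ⨅ i, (J.colon I ⊔ mIdeal (p i) ^ k) :=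
      iInf_mono fun i => sup_le_sup_right hJQ _
    have h2 := Ideal.prod_eq_iInf_of_pairwise_isCoprime (s := Finset.univ)
      (J := fun i => J.colon I ⊔ mIdeal (p i) ^ k) (fun i _ j _ hij => hcop i j hij)
    simp only [Finset.mem_univ, iInf_pos] at h2
    rw [← h2] at h1
    refine h1.trans ((aux_prod _ _ _).trans (sup_le le_rfl ?_))
    rw [Finset.prod_pow]
    exact (Ideal.pow_le_pow_right (by omega)).trans hK
end

section
/- Let J ⊆ I be ideals in ℂ[x] = ℂ[x₁,…,xₙ] with dim_ℂ ℂ[x]/(J:I) < ∞ and (J:I) + I = ℂ[x], and let {p₁,…,pₛ} = V(J) \ V(I). Then for all sufficiently large positive integers k, the natural map induces a ℂ-algebra isomorphism ℂ[x]/(J:I) ≅ ℂ[x]/(J + m_{p₁}ᵏ) × ⋯ × ℂ[x]/(J + m_{pₛ}ᵏ). -/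
open MvPolynomial

theorem mIdeal_mem_iff {n : ℕ} (p : Fin n → ℂ) (f : MvPolynomial (Fin n) ℂ) :
    f ∈ mIdeal p ↔ eval p f = 0 := by
  constructor
  · intro hf
    have : mIdeal p ≤ RingHom.ker (eval p) := by
      unfold mIdeal
      rw [Ideal.span_le]
      rintro _ ⟨i, rfl⟩
      simp [RingHom.mem_ker]
    exact this hf
  · intro hf
    have h : Ideal.Quotient.mk (mIdeal p) =
        ((Ideal.Quotient.mk (mIdeal p)).comp C).comp (eval p) := by
      apply MvPolynomial.ringHom_ext
      · intro r; simp
      · intro i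
        simp only [RingHom.comp_apply, eval_X]
        rw [Ideal.Quotient.eq]
        exact Ideal.subset_span ⟨i, rfl⟩
    rw [← Ideal.Quotient.eq_zero_iff_mem, h]
    simp [hf]

theorem mIdeal_coprime {n : ℕ} {p q : Fin n → ℂ} (h : p ≠ q) :
    mIdeal p ⊔ mIdeal q = ⊤ := by
  obtain ⟨i, hi⟩ := Function.ne_iff.mp h
  have hi' : q i - p i ≠ 0 := sub_ne_zero.mpr (Ne.symm hi)
  have h1 : (X i - C (p i) : MvPolynomial (Fin n) ℂ) ∈ mIdeal p := Ideal.subset_span ⟨i, rfl⟩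
  have h2 : (X i - C (q i) : MvPolynomial (Fin n) ℂ) ∈ mIdeal q := Ideal.subset_span ⟨i, rfl⟩
  have h3 : (C (q i - p i) : MvPolynomial (Fin n) ℂ) ∈ mIdeal p ⊔ mIdeal q := by
    have := Ideal.sub_mem _ (Ideal.mem_sup_left (T := mIdeal q) h1)
      (Ideal.mem_sup_right (S := mIdeal p) h2)
    convert this using 1
    rw [C_sub]; ring
  exact Ideal.eq_top_of_isUnit_mem _ h3 ((IsUnit.mk0 _ hi').map C)

theorem prod_sup_le {R ι : Type*} [CommRing R] (Q : Ideal R) (M : ι → Ideal R) (t : Finset ι) :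
    ∏ i ∈ t, (Q ⊔ M i) ≤ Q ⊔ ∏ i ∈ t, M i := by
  classical
  induction t using Finset.induction with
  | empty => simp
  | insert a t ha ih =>
    rw [Finset.prod_insert ha, Finset.prod_insert ha]
    refine (Ideal.mul_mono_right ih).trans ?_
    rw [Ideal.mul_le]
    intro x hx y hy
    obtain ⟨x1, hx1, x2, hx2, rfl⟩ := Submodule.mem_sup.mp hx
    obtain ⟨y1, hy1, y2, hy2, rfl⟩ := Submodule.mem_sup.mp hy
    have : (x1 + x2) * (y1 + y2) = (x1 * (y1 + y2) + x2 * y1) + x2 * y2 := by ring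
    rw [this]
    exact Submodule.add_mem_sup
      (Ideal.add_mem _ (Ideal.mul_mem_right _ _ hx1) (Ideal.mul_mem_left _ _ hy1))
      (Ideal.mul_mem_mul hx2 hy2)

/-- Proposition 8: if `(J:I) + I = ℂ[x]` then for all `k` large enough the
natural map induces a `ℂ`-algebra isomorphism
`ℂ[x]/(J:I) ≅ ∏ᵢ ℂ[x]/(J + m_{pᵢ}ᵏ)`. -/
theorem stmt_7 {n : ℕ} (J I : Ideal (MvPolynomial (Fin n) ℂ)) (hJI : J ≤ I)
    (hfin : FiniteDimensional ℂ (MvPolynomial (Fin n) ℂ ⧸ J.colon I))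
    (hsum : J.colon I + I = ⊤)
    (s : ℕ) (p : Fin s → (Fin n → ℂ)) (hinj : Function.Injective p)
    (hrange : Set.range p = zeroSet J \ zeroSet I) :
    ∃ K : ℕ, 0 < K ∧ ∀ k : ℕ, K ≤ k →
      ∃ e : (MvPolynomial (Fin n) ℂ ⧸ J.colon I) ≃ₐ[ℂ]
          (∀ i : Fin s, MvPolynomial (Fin n) ℂ ⧸ (J + mIdeal (p i) ^ k)),
        ∀ f : MvPolynomial (Fin n) ℂ,
          e (Ideal.Quotient.mk (J.colon I) f) =
            fun i => Ideal.Quotient.mk (J + mIdeal (p i) ^ k) f := by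
  classical
  obtain ⟨a, ha, b, hb, hab⟩ := Submodule.mem_sup.mp
    (show (1 : MvPolynomial (Fin n) ℂ) ∈ J.colon I ⊔ I from by
      rw [← Submodule.add_eq_sup, hsum]; trivial)
  have hJQ : J ≤ J.colon (I : Set (MvPolynomial (Fin n) ℂ)) := Ideal.le_colon
  have hV : zeroSet (J.colon (I : Set (MvPolynomial (Fin n) ℂ))) = Set.range p := by
    rw [hrange]
    ext x
    constructor
    · intro hx
      refine ⟨fun f hf => hx f (hJQ hf), fun hxI => ?_⟩
      have := congrArg (eval x) hab
      rw [map_add, hx a ha, hxI b hb] at this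
      simp at this
    · rintro ⟨hx, hxI⟩ q hq
      simp only [zeroSet, Set.mem_setOf_eq, not_forall] at hxI
      obtain ⟨f, hf, hne⟩ := hxI
      have := hx _ (Submodule.mem_colon.mp hq f hf)
      rw [smul_eq_mul, map_mul] at this
      exact (mul_eq_zero.mp this).resolve_right hne
  have hQp : ∀ i, J.colon (I : Set (MvPolynomial (Fin n) ℂ)) ≤ mIdeal (p i) := by
    intro i q hq
    rw [mIdeal_mem_iff]
    have : p i ∈ zeroSet (J.colon (I : Set (MvPolynomial (Fin n) ℂ))) := hV ▸ ⟨i, rfl⟩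
    exact this q hq
  have heq : ∀ i k, J + mIdeal (p i) ^ k =
      J.colon (I : Set (MvPolynomial (Fin n) ℂ)) ⊔ mIdeal (p i) ^ k := by
    intro i k
    rw [Submodule.add_eq_sup]
    refine le_antisymm (sup_le_sup_right hJQ _) (sup_le ?_ le_sup_right)
    intro q hq
    have ha' : a ^ k ∈ mIdeal (p i) ^ k := Ideal.pow_mem_pow (hQp i ha) k
    have hqb : q * b ∈ J := Submodule.mem_colon.mp hq b hb
    obtain ⟨c, hc⟩ := sub_dvd_pow_sub_pow 1 a k
    have hb' : 1 - a = b := by rw [← hab]; ring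
    rw [one_pow, hb'] at hc
    have : q = q * b * c + q * a ^ k := by
      rw [mul_assoc, ← hc]; ring
    rw [this]
    exact Submodule.add_mem_sup (Ideal.mul_mem_right _ _ hqb) (Ideal.mul_mem_left _ _ ha')
  have hcop : ∀ k, Pairwise (Function.onFun IsCoprime fun i => J + mIdeal (p i) ^ k) := by
    intro k i j hij
    simp only [Function.onFun]
    rw [Ideal.isCoprime_iff_sup_eq, eq_top_iff,
      ← Ideal.pow_sup_pow_eq_top (m := k) (n := k) (mIdeal_coprime (hinj.ne hij))]
    exact sup_le_sup le_sup_right le_sup_right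
  have hrad : ∏ i, mIdeal (p i) ≤ (J.colon (I : Set (MvPolynomial (Fin n) ℂ))).radical := by
    rw [← vanishingIdeal_zeroLocus_eq_radical (K := ℂ)]
    intro f hf x hx
    have hx' : x ∈ zeroSet (J.colon (I : Set (MvPolynomial (Fin n) ℂ))) := hx
    rw [hV] at hx'
    obtain ⟨i, rfl⟩ := hx'
    have hfi : f ∈ mIdeal (p i) :=
      (Ideal.prod_le_inf.trans (Finset.inf_le (Finset.mem_univ i))) hf
    exact (mIdeal_mem_iff _ _).mp hfi
  obtain ⟨N, hN⟩ := Ideal.exists_pow_le_of_le_radical_of_fg hrad (IsNoetherian.noetherian _)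
  refine ⟨N + 1, Nat.succ_pos _, fun k hk => ?_⟩
  have hinf : ⨅ i, (J + mIdeal (p i) ^ k) ≤ J.colon (I : Set (MvPolynomial (Fin n) ℂ)) := by
    have h1 := Ideal.prod_eq_iInf_of_pairwise_isCoprime (s := Finset.univ)
      (J := fun i => J + mIdeal (p i) ^ k) (fun i _ j _ hij => hcop k hij)
    simp only [Finset.mem_univ, iInf_pos] at h1
    rw [← h1]
    simp only [heq]
    refine (prod_sup_le _ _ _).trans (sup_le le_rfl ?_)
    rw [Finset.prod_pow]
    exact (Ideal.pow_le_pow_right (by omega)).trans hN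
  let φ : MvPolynomial (Fin n) ℂ →ₐ[ℂ]
      (∀ i : Fin s, MvPolynomial (Fin n) ℂ ⧸ (J + mIdeal (p i) ^ k)) :=
    Pi.algHom ℂ _ fun i => Ideal.Quotient.mkₐ ℂ (J + mIdeal (p i) ^ k)
  have hφ : ∀ f ∈ J.colon (I : Set (MvPolynomial (Fin n) ℂ)), φ f = 0 := by
    intro f hf
    funext i
    refine Ideal.Quotient.eq_zero_iff_mem.mpr ?_
    rw [heq]
    exact Ideal.mem_sup_left hf
  refine ⟨AlgEquiv.ofBijective (Ideal.Quotient.liftₐ _ φ hφ) ⟨?_, ?_⟩, fun f => rfl⟩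
  · rw [injective_iff_map_eq_zero]
    intro x hx
    obtain ⟨f, rfl⟩ := Ideal.Quotient.mk_surjective x
    refine Ideal.Quotient.eq_zero_iff_mem.mpr (hinf ?_)
    rw [Ideal.mem_iInf]
    intro i
    exact Ideal.Quotient.eq_zero_iff_mem.mp (congrFun hx i)
  · intro y
    obtain ⟨f, hf⟩ := Ideal.pi_quotient_surjective (hcop k) y
    exact ⟨Ideal.Quotient.mk _ f, funext hf⟩
end
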